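/- Let ζ>0 and ν>0. Set k₀ = ⌈10^{2/ν}⌉ and c = Σ_{k=k₀+1}^∞ (k^{-ζν} − (k+1)^{-ζν})·k^{-ν} (a finite sum of a convergent series), and let ρ = Σ_{k=k₀+1}^∞ (k^{-ζν} − (k+1)^{-ζν})·δ_{k^{-ν}} + c·δ_1, where δ_x is the Dirac measure at x. Then: (i) ρ((0,λ]) ≤ λ^ζ for all λ ∈ [0,1]; and (ii) the Steepest Descent losses L_n (defined by q_0 = 1, α_n = (∫λ q_n² dρ)/(∫λ² q_n² dρ), q_{n+1}(λ) = (1-α_nλ)q_n(λ), L_n = (1/2)∫ q_n(λ)² ρ(dλ)) satisfy liminf_{n→∞} n^ζ·L_n ≥ 10^{-2ζ}·Γ(ζ+1)/(2·(2 ln 2)^ζ). -/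

import Mathlib

open MeasureTheory Filter Set

theorem sd_alg (M1 M2 M3 M4 M5 δ a : ℝ) (h1 : 0 < M1) (h2 : 0 < M2) (ha : a * M2 = M1)
    (hd : 0 < δ)
    (hV : δ * M1 ^ 2 ≤ M3 * M1 - M2 ^ 2)
    (hP : ∀ u v d : ℝ, 0 ≤ u^2*M1 + 2*u*v*M2 + (v^2+2*u*d)*M3 + 2*v*d*M4 + d^2*M5) :
    0 < M1 - 2*a*M2 + a^2*M3 ∧
    δ * (M1 - 2*a*M2 + a^2*M3)^2 ≤ (M3 - 2*a*M4 + a^2*M5) * (M1 - 2*a*M2 + a^2*M3)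
      - (M2 - 2*a*M3 + a^2*M4)^2 := by
  have ha0 : 0 < a := by
    by_contra h
    nlinarith
  set G := M1 - 2*a*M2 + a^2*M3 with hG
  set H := M2 - 2*a*M3 + a^2*M4 with hH
  set J := M3 - 2*a*M4 + a^2*M5 with hJ
  have hG1 : G * M1 = a^2 * (M3 * M1 - M2^2) := by
    rw [hG]; 
    linear_combination (M1 - a*M2) * (-1) * ha + 0 * ha
  have hVpos : 0 < M3 * M1 - M2^2 := by nlinarith [mul_pos hd (pow_pos h1 2)]
  have hGpos : 0 < G := by
    have : 0 < G * M1 := by rw [hG1]; positivity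
    exact pos_of_mul_pos_left this h1.le
  refine ⟨hGpos, ?_⟩
  -- polynomial M1 * (1 - aλ)(Gλ - H) - X, X = -G^2/a
  obtain ⟨X, hX⟩ : ∃ X, X = G * (M2 - a * M3) := ⟨_, rfl⟩
  have hXa : X * a = - G^2 := by
    rw [hX]; linear_combination (-G) * ha +  G * hG
  have key := hP (M1 * (-H) - X) (M1 * (G + a * H)) (M1 * (-(a * G)))
  have hkey : 0 ≤ M1 * (M1 * (G * (G * J - H^2)) - X^2) := by
    convert key using 1
    rw [hX]
    linear_combination M1^2*G^2*hJ - 2*M1^2*G*H*hH + M1^2*H^2*hG + 2*M1*(G * (M2 - a * M3))*H*ha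
  have h3 : X^2 ≤ M1 * (G * (G * J - H^2)) := by
    have := nonneg_of_mul_nonneg_right hkey h1
    linarith
  have h4 : G^2 * G^2 ≤ a^2 * (M1 * (G * (G * J - H^2))) := by
    have : (X*a)^2 ≤ a^2 * (M1 * (G * (G * J - H^2))) := by nlinarith [pow_pos ha0 2]
    rw [hXa] at this
    linarith
  have e1 : G^2 * G * (a^2 * (δ * M1^2)) ≤ G^2 * G * (G * M1) := by
    rw [hG1]; gcongr
  have e2 := mul_le_mul_of_nonneg_left h4 h1.le
  have e3 : (G * a^2 * M1^2) * (δ * G^2) ≤ (G * a^2 * M1^2) * (J * G - H^2) := by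
    linarith
  exact le_of_mul_le_mul_left e3 (by positivity)


theorem sd_integral (x w : ℕ → ℝ) (c : ℝ) (ρ : Measure ℝ)
    (hw : ∀ k, 0 ≤ w k) (hws : Summable w) (hx0 : ∀ k, 0 ≤ x k) (hx1 : ∀ k, x k ≤ 1) (hc : 0 ≤ c)
    (hρ : ρ = Measure.sum (fun k : ℕ => ENNReal.ofReal (w k) • Measure.dirac (x k))
      + ENNReal.ofReal c • Measure.dirac (1:ℝ)) (f : ℝ → ℝ) (hf : Continuous f) :
    Integrable f ρ ∧ Summable (fun k => w k * f (x k)) ∧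
      ∫ l, f l ∂ρ = ∑' k, w k * f (x k) + c * f 1 := by
  obtain ⟨C, hC⟩ := (isCompact_Icc (a := (0:ℝ)) (b := 1)).exists_bound_of_continuousOn hf.continuousOn
  have hi : ∀ k, ∀ g : ℝ → ℝ, ∫ l, g l ∂(ENNReal.ofReal (w k) • Measure.dirac (x k)) = w k * g (x k) := by
    intro k g
    rw [integral_smul_measure, integral_dirac, ENNReal.toReal_ofReal (hw k), smul_eq_mul]
  have h1 : Integrable f (Measure.sum (fun k : ℕ => ENNReal.ofReal (w k) • Measure.dirac (x k))) := by
    apply integrable_sum_measure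
    · intro k
      exact (integrable_dirac (by simp)).smul_measure (by simp)
    · simp_rw [hi _ (fun l => ‖f l‖)]
      refine Summable.of_nonneg_of_le (fun k => mul_nonneg (hw k) (norm_nonneg _)) 
        (fun k => mul_le_mul_of_nonneg_left (hC (x k) ⟨hx0 k, hx1 k⟩) (hw k)) (hws.mul_right C)
  have h2 : Integrable f (ENNReal.ofReal c • Measure.dirac (1:ℝ)) :=
    (integrable_dirac (by simp)).smul_measure (by simp)
  refine ⟨hρ ▸ h1.add_measure h2, ?_, ?_⟩
  · have := (hasSum_integral_measure h1).summable
    simpa only [hi] using this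
  · rw [hρ, integral_add_measure h1 h2, integral_sum_measure h1, integral_smul_measure,
      integral_dirac, ENNReal.toReal_ofReal hc, smul_eq_mul]
    simp only [hi]

theorem sd_tele (y : ℕ → ℝ) (hy : Antitone y) (hlim : Tendsto y atTop (nhds 0)) :
    HasSum (fun k => y k - y (k+1)) (y 0) := by
  rw [hasSum_iff_tendsto_nat_of_nonneg (fun k => sub_nonneg.2 (hy (Nat.le_succ k)))]
  simp_rw [Finset.sum_range_sub']
  simpa using (tendsto_const_nhds (x := y 0)).sub hlim

theorem sd_measure (ζ : ℝ) (hζ : 0 < ζ) (x : ℕ → ℝ) (c : ℝ) (ρ : Measure ℝ)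
    (hx : StrictAnti x) (hx0 : ∀ k, 0 < x k) (hx1 : x 0 ≤ 1/100)
    (hlim : Tendsto x atTop (nhds 0)) (hc : 0 ≤ c)
    (hc1 : x 0 ^ ζ + c ≤ 1)
    (hρ : ρ = Measure.sum (fun k : ℕ => ENNReal.ofReal (x k ^ ζ - x (k+1) ^ ζ) • Measure.dirac (x k))
      + ENNReal.ofReal c • Measure.dirac (1:ℝ)) :
    ∀ l ∈ Set.Icc (0:ℝ) 1, (ρ (Set.Ioc 0 l)).toReal ≤ l ^ ζ := by
  rintro l ⟨hl0, hl1⟩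
  have hy : Antitone (fun k => x k ^ ζ) := fun a b h =>
    Real.rpow_le_rpow (hx0 b).le (hx.antitone h) hζ.le
  have hw : ∀ k, 0 ≤ x k ^ ζ - x (k+1) ^ ζ := fun k => sub_nonneg.2 (hy (Nat.le_succ k))
  apply ENNReal.toReal_le_of_le_ofReal (Real.rpow_nonneg hl0 _)
  rw [hρ, Measure.add_apply, Measure.sum_apply _ measurableSet_Ioc]
  simp only [Measure.smul_apply, smul_eq_mul, Measure.dirac_apply' _ measurableSet_Ioc]
  rcases hl0.eq_or_lt with rfl | hl0
  · simp
  have main : ∀ m, (∀ k < m, l < x k) → ∑' k, ENNReal.ofReal (x k ^ ζ - x (k+1) ^ ζ) * 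
      (Ioc 0 l).indicator 1 (x k) ≤ ENNReal.ofReal (x m ^ ζ) := by
    intro m hm
    apply ENNReal.tsum_le_of_sum_range_le
    intro N
    have : ∀ k, ENNReal.ofReal (x k ^ ζ - x (k+1) ^ ζ) * (Ioc 0 l).indicator 1 (x k) ≤
        ENNReal.ofReal (if k < m then 0 else x k ^ ζ - x (k+1) ^ ζ) := by
      intro k
      split_ifs with h
      · rw [Set.indicator_of_notMem (fun h' => absurd h'.2 (not_le.2 (hm k h)))]; simp
      · refine (mul_le_mul_right (Set.indicator_le_self' (by simp) (x k)) _).trans ?_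
        simp
    refine (Finset.sum_le_sum fun k _ => this k).trans ?_
    rw [← ENNReal.ofReal_sum_of_nonneg]
    · apply ENNReal.ofReal_le_ofReal
      have : ∀ N, ∑ k ∈ Finset.range N, (if k < m then 0 else x k ^ ζ - x (k+1) ^ ζ) =
          if N < m then 0 else x m ^ ζ - x (max N m) ^ ζ := by
        intro N
        induction N with
        | zero =>
          by_cases h : 0 < m
          · simp [h]
          · simp at h; simp [h]
        | succ N ih =>
          rw [Finset.sum_range_succ, ih]
          by_cases h : N < m
          · by_cases h2 : N + 1 < m
            · simp [h, h2]
            · have : m = N + 1 := by omega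
              simp [this]
          · have h2 : ¬ (N+1 < m) := by omega
            simp only [h, h2, if_false]
            rw [max_eq_left (by omega), max_eq_left (by omega)]; ring
      rw [this]
      have := Real.rpow_nonneg (hx0 (max N m)).le ζ
      have := Real.rpow_nonneg (hx0 m).le ζ
      split_ifs <;> linarith
    · intro k _
      split_ifs
      · rfl
      · exact hw k
  rcases hl1.eq_or_lt with rfl | hl1
  · refine (add_le_add (main 0 (by simp)) (le_refl _)).trans ?_
    simp only [right_mem_Ioc, zero_lt_one, indicator_of_mem, Pi.one_apply, mul_one, Real.one_rpow]
    rw [← ENNReal.ofReal_add (Real.rpow_nonneg (hx0 0).le _) hc]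
    exact ENNReal.ofReal_le_ofReal hc1
  · have hex : ∃ m, x m ≤ l := by
      obtain ⟨m, hm⟩ := (hlim.eventually (gt_mem_nhds hl0)).exists
      exact ⟨m, hm.le⟩
    classical
    have h1 := main (Nat.find hex) (fun k hk => not_le.1 (Nat.find_min hex hk))
    rw [Set.indicator_of_notMem (s := Ioc 0 l) (a := 1) (fun h' => absurd h'.2 (not_le.2 hl1))]
    simp only [mul_zero, add_zero]
    exact h1.trans (ENNReal.ofReal_le_ofReal (Real.rpow_le_rpow (hx0 _).le (Nat.find_spec hex) hζ.le))


theorem sd_hasSum_Ioc (x : ℕ → ℝ) (hx : StrictAnti x) (hx0 : ∀ k, 0 < x k)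
    (hlim : Tendsto x atTop (nhds 0)) (f : ℝ → ℝ) (hf : IntegrableOn f (Ioi 0)) :
    HasSum (fun k => ∫ t in Ioc (x (k+1)) (x k), f t) (∫ t in Ioc 0 (x 0), f t) := by
  have hU : (⋃ k, Ioc (x (k+1)) (x k)) = Ioc 0 (x 0) := by
    ext t
    simp only [mem_iUnion, mem_Ioc]
    constructor
    · rintro ⟨k, h1, h2⟩
      exact ⟨(hx0 _).trans h1, h2.trans (hx.antitone (Nat.zero_le k))⟩
    · rintro ⟨h1, h2⟩
      have hex : ∃ m, x m < t := (hlim.eventually (gt_mem_nhds h1)).exists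
      classical
      have hs := Nat.find_spec hex
      have hm : Nat.find hex ≠ 0 := by
        intro h; rw [h] at hs; linarith
      obtain ⟨k, hk⟩ := Nat.exists_eq_succ_of_ne_zero hm
      refine ⟨k, ?_, ?_⟩
      · rw [hk] at hs; exact hs
      · exact not_lt.1 (Nat.find_min hex (by omega))
  rw [← hU]
  apply hasSum_integral_iUnion (fun k => measurableSet_Ioc)
  · exact hx.antitone.pairwise_disjoint_on_Ioc_succ
  · rw [hU]; exact hf.mono_set Ioc_subset_Ioi_self

theorem sd_intOn (ζ b : ℝ) (hζ : 0 < ζ) (hb : 0 < b) :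
    IntegrableOn (fun t : ℝ => ζ * (t ^ (ζ - 1) * Real.exp (-(b * t)))) (Ioi 0) := by
  have := integrableOn_rpow_mul_exp_neg_mul_rpow (p := 1) (s := ζ - 1) (b := b) (by linarith) one_pos hb
  simp only [Real.rpow_one, neg_mul] at this
  exact this.const_mul ζ

theorem sd_int (ζ b : ℝ) (hζ : 0 < ζ) (hb : 0 < b) :
    ∫ t in Ioi (0:ℝ), ζ * (t ^ (ζ - 1) * Real.exp (-(b * t))) = Real.Gamma (ζ+1) / b ^ ζ := by
  rw [integral_const_mul, Real.integral_rpow_mul_exp_neg_mul_Ioi hζ hb, Real.Gamma_add_one hζ.ne',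
    Real.div_rpow zero_le_one hb.le, Real.one_rpow]
  ring

theorem sd_w (ζ a b : ℝ) (hζ : 0 < ζ) (hab : a ≤ b) :
    ∫ t in Ioc a b, ζ * t ^ (ζ - 1) = b ^ ζ - a ^ ζ := by
  rw [← intervalIntegral.integral_of_le hab, intervalIntegral.integral_const_mul,
    integral_rpow (Or.inl (by linarith))]
  simp only [sub_add_cancel]
  field_simp

theorem sd_wint (ζ a b : ℝ) (hζ : 0 < ζ) (hab : a ≤ b) :
    IntegrableOn (fun t : ℝ => ζ * t ^ (ζ - 1)) (Ioc a b) := by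
  rw [← intervalIntegrable_iff_integrableOn_Ioc_of_le hab]
  exact (intervalIntegral.intervalIntegrable_rpow' (by linarith)).const_mul ζ

theorem sd_upper (ζ b : ℝ) (hζ : 0 < ζ) (hb : 0 < b) (x : ℕ → ℝ) (hx : StrictAnti x)
    (hx0 : ∀ k, 0 < x k) (hlim : Tendsto x atTop (nhds 0))
    (hs : Summable fun k => (x k ^ ζ - x (k+1) ^ ζ) * Real.exp (-(b * x k))) :
    ∑' k, (x k ^ ζ - x (k+1) ^ ζ) * Real.exp (-(b * x k)) ≤ Real.Gamma (ζ+1) / b ^ ζ := by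
  have hI := sd_intOn ζ b hζ hb
  have h := sd_hasSum_Ioc x hx hx0 hlim _ hI
  rw [← sd_int ζ b hζ hb]
  calc _ ≤ ∑' k, ∫ t in Ioc (x (k+1)) (x k), ζ * (t ^ (ζ - 1) * Real.exp (-(b * t))) := by
        refine hs.tsum_le_tsum (fun k => ?_) h.summable
        rw [← sd_w ζ _ _ hζ (hx.antitone (Nat.le_succ k)), ← integral_mul_const]
        refine setIntegral_mono_on ((sd_wint ζ _ _ hζ (hx.antitone (Nat.le_succ k))).mul_const _)
          (hI.mono_set fun t ht => (hx0 _).trans ht.1) measurableSet_Ioc ?_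
        intro t ht
        have ht0 : 0 < t := (hx0 _).trans ht.1
        rw [mul_assoc]
        have := ht.2
        gcongr
    _ = _ := h.tsum_eq
    _ ≤ _ := by
        refine setIntegral_mono_set hI ?_ (Ioc_subset_Ioi_self).eventuallyLE
        filter_upwards [ae_restrict_mem measurableSet_Ioi] with t ht
        have : (0:ℝ) < t := ht
        simp only [Pi.zero_apply]
        positivity

theorem sd_lower (ζ b : ℝ) (hζ : 0 < ζ) (hb : 0 < b) (x : ℕ → ℝ) (hx : StrictAnti x)
    (hx0 : ∀ k, 0 < x k) (hlim : Tendsto x atTop (nhds 0)) (hx2 : ∀ k, x k ≤ 2 * x (k+1))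
    (hs : Summable fun k => (x k ^ ζ - x (k+1) ^ ζ) * Real.exp (-(b * x k))) :
    Real.Gamma (ζ+1) / (2 * b) ^ ζ - Real.exp (-(b * x 0)) * (Real.Gamma (ζ+1) / b ^ ζ) ≤
    ∑' k, (x k ^ ζ - x (k+1) ^ ζ) * Real.exp (-(b * x k)) := by
  have hI := sd_intOn ζ (2*b) hζ (by positivity)
  have hI' := sd_intOn ζ b hζ hb
  have h := sd_hasSum_Ioc x hx hx0 hlim _ hI
  rw [← sd_int ζ (2*b) hζ (by positivity), ← sd_int ζ b hζ hb]
  have h1 : ∫ t in Ioc 0 (x 0), ζ * (t ^ (ζ - 1) * Real.exp (-(2 * b * t))) ≤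
      ∑' k, (x k ^ ζ - x (k+1) ^ ζ) * Real.exp (-(b * x k)) := by
    rw [← h.tsum_eq]
    refine h.summable.tsum_le_tsum (fun k => ?_) hs
    rw [← sd_w ζ _ _ hζ (hx.antitone (Nat.le_succ k)), ← integral_mul_const]
    refine setIntegral_mono_on (hI.mono_set fun t ht => (hx0 _).trans ht.1)
      ((sd_wint ζ _ _ hζ (hx.antitone (Nat.le_succ k))).mul_const _) measurableSet_Ioc ?_
    intro t ht
    have ht0 : 0 < t := (hx0 _).trans ht.1
    rw [mul_assoc ζ]
    have h3 : b * x k ≤ 2 * b * t := by nlinarith [hx2 k, ht.1]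
    gcongr
  have h2 : ∫ t in Ioi (x 0), ζ * (t ^ (ζ - 1) * Real.exp (-(2 * b * t))) ≤
      Real.exp (-(b * x 0)) * ∫ t in Ioi (0:ℝ), ζ * (t ^ (ζ - 1) * Real.exp (-(b * t))) := by
    have hsub : Ioi (x 0) ⊆ Ioi 0 := Ioi_subset_Ioi (hx0 0).le
    rw [← integral_const_mul]
    calc _ ≤ ∫ t in Ioi (x 0), Real.exp (-(b * x 0)) * (ζ * (t ^ (ζ - 1) * Real.exp (-(b * t)))) := by
          refine setIntegral_mono_on (hI.mono_set hsub) ((hI'.mono_set hsub).const_mul _) measurableSet_Ioi ?_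
          intro t ht
          have ht' : x 0 < t := ht
          have ht0 : 0 < t := (hx0 0).trans ht
          have : Real.exp (-(2*b*t)) ≤ Real.exp (-(b * x 0)) * Real.exp (-(b * t)) := by
            rw [← Real.exp_add]
            apply Real.exp_le_exp.2
            nlinarith
          calc _ ≤ ζ * (t ^ (ζ - 1) * (Real.exp (-(b * x 0)) * Real.exp (-(b * t)))) := by gcongr
            _ = _ := by ring
      _ ≤ _ := by
        refine setIntegral_mono_set (hI'.const_mul _) ?_ hsub.eventuallyLE
        filter_upwards [ae_restrict_mem measurableSet_Ioi] with t ht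
        have : (0:ℝ) < t := ht
        simp only [Pi.zero_apply]
        positivity
  have h3 : ∫ t in Ioi (0:ℝ), ζ * (t ^ (ζ - 1) * Real.exp (-(2 * b * t))) =
     (∫ t in Ioc 0 (x 0), ζ * (t ^ (ζ - 1) * Real.exp (-(2 * b * t)))) + 
      ∫ t in Ioi (x 0), ζ * (t ^ (ζ - 1) * Real.exp (-(2 * b * t))) := by
    rw [← setIntegral_union (Ioc_disjoint_Ioi le_rfl) measurableSet_Ioi
      (hI.mono_set Ioc_subset_Ioi_self) (hI.mono_set (Ioi_subset_Ioi (hx0 0).le)),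
      Ioc_union_Ioi_eq_Ioi (hx0 0).le]
  linarith

/-- dynamics, with an abstract positive linear functional given by the integral -/
theorem sd_dyn (ρ : Measure ℝ) (hint : ∀ f : ℝ → ℝ, Continuous f → Integrable f ρ)
    (hae : ∀ᵐ l ∂ρ, 0 ≤ l ∧ l ≤ 1)
    (q : ℕ → ℝ → ℝ) (A : ℕ → ℝ) (hqc : ∀ n, Continuous (q n))
    (hA : ∀ n, A n = (∫ l, l * (q n l) ^ 2 ∂ρ) / ∫ l, l ^ 2 * (q n l) ^ 2 ∂ρ)
    (hqrec : ∀ n l, q (n + 1) l = (1 - A n * l) * q n l)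
    (h0 : 0 < ∫ l, l ^ 1 * (q 0 l) ^ 2 ∂ρ)
    (h0' : 0.24 * (∫ l, l ^ 1 * (q 0 l) ^ 2 ∂ρ) ^ 2 ≤
      (∫ l, l ^ 3 * (q 0 l) ^ 2 ∂ρ) * (∫ l, l ^ 1 * (q 0 l) ^ 2 ∂ρ) - (∫ l, l ^ 2 * (q 0 l) ^ 2 ∂ρ) ^ 2) :
    ∀ n, 1 ≤ A n ∧ A n ≤ 5/2 ∧
      (∫ l, l ^ 2 * (q n l) ^ 2 ∂ρ) ≤ 0.6 * (∫ l, l ^ 1 * (q n l) ^ 2 ∂ρ) := by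
  obtain ⟨M, hM⟩ : ∃ M : ℕ → ℕ → ℝ, ∀ j n, M j n = ∫ l, l ^ j * (q n l) ^ 2 ∂ρ := ⟨_, fun _ _ => rfl⟩
  have hi : ∀ j n, Integrable (fun l => l ^ j * (q n l) ^ 2) ρ := fun j n =>
    hint _ ((continuous_id.pow j).mul ((hqc n).pow 2))
  have hrec : ∀ j n, M j (n+1) = M j n - 2 * A n * M (j+1) n + (A n)^2 * M (j+2) n := by
    intro j n
    simp only [hM]
    simp_rw [← integral_const_mul]
    rw [← integral_sub, ← integral_add]
    · congr 1
      ext l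
      rw [hqrec]
      ring
    all_goals
      apply hint
      have := hqc n
      fun_prop
  have hP : ∀ n, ∀ u v d : ℝ, 0 ≤ u^2*M 1 n + 2*u*v*M 2 n + (v^2+2*u*d)*M 3 n + 2*v*d*M 4 n + d^2*M 5 n := by
    intro n u v d
    have : ∫ l, l * ((u + v * l + d * l^2) * q n l)^2 ∂ρ = 
       u^2*M 1 n + 2*u*v*M 2 n + (v^2+2*u*d)*M 3 n + 2*v*d*M 4 n + d^2*M 5 n := by
      simp only [hM]
      simp_rw [← integral_const_mul]
      rw [← integral_add, ← integral_add, ← integral_add, ← integral_add]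
      · congr 1
        ext l
        ring
      all_goals 
        apply hint
        have := hqc n
        fun_prop
    rw [← this]
    apply integral_nonneg_of_ae
    filter_upwards [hae] with l hl
    exact mul_nonneg hl.1 (sq_nonneg _)
  have h32 : ∀ n, M 3 n ≤ M 2 n := by
    intro n
    simp only [hM]
    apply integral_mono_ae (hi _ _) (hi _ _)
    filter_upwards [hae] with l hl
    have : l^3 ≤ l^2 := pow_le_pow_of_le_one hl.1 hl.2 (by norm_num)
    gcongr
  have hA' : ∀ n, A n = M 1 n / M 2 n := by
    intro n
    rw [hA, hM, hM]; simp
  have h2pos : ∀ n, 0 < M 1 n → 0.24 * (M 1 n)^2 ≤ M 3 n * M 1 n - (M 2 n)^2 → 0 < M 2 n := by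
    intro n h1 h2
    have : 0 < M 3 n := by
      by_contra h
      nlinarith [sq_nonneg (M 2 n), pow_pos h1 2]
    linarith [h32 n]
  have main : ∀ n, 0 < M 1 n ∧ 0.24 * (M 1 n)^2 ≤ M 3 n * M 1 n - (M 2 n)^2 := by
    intro n
    induction n with
    | zero => simp only [hM]; exact ⟨h0, h0'⟩
    | succ n ih =>
      have h2 := h2pos n ih.1 ih.2
      rw [hrec, hrec, hrec]
      exact sd_alg _ _ _ _ _ _ _ ih.1 h2 (by rw [hA']; field_simp) (by norm_num) ih.2 (hP n)
  intro n
  obtain ⟨h1, hV⟩ := main n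
  have h2 := h2pos n h1 hV
  have hsq : (M 2 n - M 1 n / 2)^2 ≤ (M 1 n / 10)^2 := by nlinarith [h32 n]
  obtain ⟨ha, hb⟩ := abs_le.1 (abs_le_of_sq_le_sq hsq (by positivity))
  rw [← hM, ← hM, hA']
  refine ⟨?_, ?_, ?_⟩
  · rw [le_div_iff₀ h2]; linarith
  · rw [div_le_iff₀ h2]; linarith
  · linarith

theorem sd_bern (p y v : ℝ) (hp : 0 < p) (hy : 0 < y) (hv : 0 < v) :
    y ^ (-p) - p * y ^ (-p) * ((v - y) / y) ≤ v ^ (-p) := by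
  have h1 : v ^ (-p) = y ^ (-p) * (v / y) ^ (-p) := by
    rw [← Real.mul_rpow hy.le (by positivity), mul_div_cancel₀ _ hy.ne']
  have hu : 0 < v / y := by positivity
  have h2 : 1 - p * (v / y - 1) ≤ (v / y) ^ (-p) := by
    rw [Real.rpow_def_of_pos hu]
    have := Real.add_one_le_exp (Real.log (v/y) * -p)
    have := Real.log_le_sub_one_of_pos hu
    nlinarith
  have h3 : 0 < y ^ (-p) := by positivity
  rw [h1]
  have h4 : (v - y)/y = v / y - 1 := by field_simp
  rw [h4]
  nlinarith

theorem sd_seq (ζ ν : ℝ) (hζ : 0 < ζ) (hν : 0 < ν) (k₀ : ℕ) (hk₀ : (10:ℝ) ^ (2 / ν) ≤ k₀) (x : ℕ → ℝ)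
    (hx : ∀ k : ℕ, x k = ((k:ℝ) + k₀ + 1) ^ (-ν)) :
    StrictAnti x ∧ (∀ k, 0 < x k) ∧ x 0 ≤ 1/100 ∧ Tendsto x atTop (nhds 0) ∧
    (∀ᶠ k in atTop, x k ≤ 2 * x (k+1)) ∧ (∀ k : ℕ, x k ^ ζ = ((k:ℝ) + k₀ + 1) ^ (-(ζ * ν))) ∧
    x 0 ^ ζ + ∑' k, (x k ^ ζ - x (k+1) ^ ζ) * x k ≤ 1 := by
  have hk1 : (0:ℝ) < k₀ := lt_of_lt_of_le (by positivity) hk₀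
  have hpos : ∀ k, 0 < x k := fun k => by rw [hx]; positivity
  have hanti : StrictAnti x := by
    refine strictAnti_nat_of_succ_lt fun k => ?_
    rw [hx, hx]
    apply Real.rpow_lt_rpow_of_neg (by positivity) _ (by linarith)
    push_cast; linarith
  have h100 : (k₀:ℝ) ^ (-ν) ≤ 1/100 := by
    calc (k₀:ℝ) ^ (-ν) ≤ ((10:ℝ) ^ (2 / ν)) ^ (-ν) :=
          Real.rpow_le_rpow_of_nonpos (by positivity) hk₀ (by linarith)
      _ = 1/100 := by
        rw [← Real.rpow_mul (by norm_num)]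
        have : 2 / ν * -ν = ((-2 : ℤ) : ℝ) := by push_cast; field_simp
        rw [this, Real.rpow_intCast]; norm_num
  have hx01 : x 0 ≤ 1/100 := by
    refine le_trans ?_ h100
    rw [hx]
    apply Real.rpow_le_rpow_of_nonpos hk1 _ (by linarith)
    push_cast; linarith
  have htop : ∀ a : ℝ, Tendsto (fun k : ℕ => (k:ℝ) + a) atTop atTop := fun a =>
    tendsto_atTop_add_const_right _ _ tendsto_natCast_atTop_atTop
  have hlim : Tendsto x atTop (nhds 0) := by
    have : x = fun k : ℕ => ((k:ℝ) + (k₀ + 1)) ^ (-ν) := by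
      ext k; rw [hx, add_assoc]
    rw [this]
    exact (tendsto_rpow_neg_atTop hν).comp (htop _)
  have hxz : ∀ k : ℕ, x k ^ ζ = ((k:ℝ) + k₀ + 1) ^ (-(ζ * ν)) := by
    intro k
    rw [hx, ← Real.rpow_mul (by positivity)]
    congr 1; ring
  refine ⟨hanti, hpos, hx01, hlim, ?_, hxz, ?_⟩
  · have h2 : 1 < (2:ℝ) ^ (1/ν) := Real.one_lt_rpow (by norm_num) (by positivity)
    filter_upwards [(tendsto_natCast_atTop_atTop (R := ℝ)).eventually_ge_atTop (1 / ((2:ℝ)^(1/ν) - 1))] with k hk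
    rw [hx, hx]
    rw [div_le_iff₀ (by linarith)] at hk
    have h3 : (((k+1:ℕ):ℝ) + k₀ + 1) ≤ (2:ℝ)^(1/ν) * ((k:ℝ) + k₀ + 1) := by
      push_cast
      nlinarith
    have h4 := Real.rpow_le_rpow_of_nonpos (by positivity) h3 (z := -ν) (by linarith)
    rw [Real.mul_rpow (by positivity) (by positivity), ← Real.rpow_mul (by norm_num)] at h4
    have : 1 / ν * -ν = ((-1 : ℤ) : ℝ) := by push_cast; field_simp
    rw [this, Real.rpow_intCast] at h4
    norm_num at h4 ⊢
    linarith
  · set p := ζ * ν + ν with hp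
    have hp0 : 0 < p := by positivity
    set z : ℕ → ℝ := fun k => ((k:ℝ) + k₀) ^ (-p) with hz
    have hzlim : Tendsto z atTop (nhds 0) := (tendsto_rpow_neg_atTop hp0).comp (htop _)
    have hzanti : Antitone z := by
      refine antitone_nat_of_succ_le fun k => ?_
      apply Real.rpow_le_rpow_of_nonpos (by positivity) _ (by linarith)
      push_cast; linarith
    have ht := sd_tele z hzanti hzlim
    have hterm : ∀ k, (x k ^ ζ - x (k+1) ^ ζ) * x k ≤ ζ / (ζ+1) * (z k - z (k+1)) := by
      intro k
      rw [hxz, hxz, hx]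
      simp only [hz]
      obtain ⟨y, hy⟩ : ∃ y : ℝ, y = (k:ℝ) + k₀ + 1 := ⟨_, rfl⟩
      have hk0 : (0:ℝ) ≤ k := Nat.cast_nonneg k
      have hy0 : 0 < y := by rw [hy]; positivity
      have e1 : (((k+1:ℕ):ℝ) + k₀ + 1) = y + 1 := by push_cast; rw [hy]; ring
      have e2 : (((k+1:ℕ):ℝ) + k₀) = y := by push_cast; rw [hy]; ring
      have e3 : (k:ℝ) + k₀ = y - 1 := by rw [hy]; ring
      rw [e1, e2, ← hy, e3]
      have b1 := sd_bern (ζ*ν) y (y+1) (by positivity) hy0 (by positivity)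
      have b2 := sd_bern p y (y-1) hp0 hy0 (by rw [hy]; linarith)
      have e4 : y ^ (-p) = y ^ (-(ζ*ν)) * y ^ (-ν) := by
        rw [← Real.rpow_add hy0]; congr 1; rw [hp]; ring
      have hyν : 0 < y ^ (-ν) := by positivity
      calc _ ≤ (ζ * ν * y ^ (-(ζ*ν)) * (1 / y)) * y ^ (-ν) := by
            gcongr
            have : (y + 1 - y)/y = 1/y := by ring
            rw [this] at b1; linarith
        _ = ζ / (ζ+1) * (p * y ^ (-p) * (1/y)) := by
            rw [e4, hp]; field_simp
        _ ≤ _ := by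
            gcongr
            have : (y - 1 - y)/y = -(1/y) := by ring
            rw [this] at b2; linarith
    have hnn : ∀ k, 0 ≤ (x k ^ ζ - x (k+1) ^ ζ) * x k := fun k =>
      mul_nonneg (sub_nonneg.2 (Real.rpow_le_rpow (hpos _).le (hanti.antitone (Nat.le_succ k)) hζ.le)) (hpos k).le
    have hs2 := ht.mul_left (ζ / (ζ+1))
    have hle : ∑' k, (x k ^ ζ - x (k+1) ^ ζ) * x k ≤ ζ / (ζ+1) * z 0 := by
      rw [← hs2.tsum_eq]
      exact (Summable.of_nonneg_of_le hnn hterm hs2.summable).tsum_le_tsum hterm hs2.summable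
    have hz0 : z 0 = ((k₀:ℝ) ^ (-ν)) ^ ζ * (k₀:ℝ) ^ (-ν) := by
      simp only [hz]
      rw [← Real.rpow_mul hk1.le, ← Real.rpow_add hk1, hp]
      push_cast
      congr 1 <;> ring
    have hE : ((k₀:ℝ) ^ (-ν)) ^ ζ ≤ (1/100:ℝ)^ζ := Real.rpow_le_rpow (by positivity) h100 hζ.le
    have hx0E : x 0 ^ ζ ≤ (1/100:ℝ)^ζ := Real.rpow_le_rpow (hpos 0).le hx01 hζ.le
    have hz1 : z 0 ≤ (1/100:ℝ)^ζ * 1 := by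
      rw [hz0]
      gcongr
      linarith
    have hfrac : ζ / (ζ+1) * z 0 ≤ ζ * (1/100:ℝ)^ζ := by
      calc _ ≤ ζ * ((1/100:ℝ)^ζ * 1) := by
            gcongr
            apply div_le_self hζ.le; linarith
        _ = _ := by ring
    have hfin : (1/100:ℝ)^ζ * (1 + ζ) ≤ 1 := by
      have h5 : 1 + ζ ≤ (100:ℝ)^ζ := by
        have : (Real.exp 1)^ζ ≤ (100:ℝ)^ζ := 
          Real.rpow_le_rpow (Real.exp_pos _).le (by linarith [Real.exp_one_lt_d9]) hζ.le
        rw [← Real.exp_mul, one_mul] at this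
        linarith [Real.add_one_le_exp ζ]
      calc _ ≤ (1/100:ℝ)^ζ * (100:ℝ)^ζ := by gcongr
        _ = 1 := by rw [← Real.mul_rpow (by norm_num) (by norm_num)]; norm_num
    linarith

theorem sd_main (ζ : ℝ) (hζ : 0 < ζ) (x : ℕ → ℝ) (c : ℝ) (ρ : Measure ℝ)
    (hx : StrictAnti x) (hx0 : ∀ k, 0 < x k) (hx1 : x 0 ≤ 1/100)
    (hlim : Tendsto x atTop (nhds 0)) (hx2 : ∀ᶠ k in atTop, x k ≤ 2 * x (k+1))
    (hc : c = ∑' k, (x k ^ ζ - x (k+1) ^ ζ) * x k)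
    (hρ : ρ = Measure.sum (fun k : ℕ => ENNReal.ofReal (x k ^ ζ - x (k+1) ^ ζ) • Measure.dirac (x k))
      + ENNReal.ofReal c • Measure.dirac (1:ℝ))
    (q : ℕ → ℝ → ℝ) (A : ℕ → ℝ)
    (hq0 : ∀ l, q 0 l = 1)
    (hA : ∀ n, A n = (∫ l, l * (q n l) ^ 2 ∂ρ) / ∫ l, l ^ 2 * (q n l) ^ 2 ∂ρ)
    (hqrec : ∀ n l, q (n + 1) l = (1 - A n * l) * q n l) :
    (10:ℝ) ^ (-(2 * ζ)) * Real.Gamma (ζ + 1) / (2 * (2 * Real.log 2) ^ ζ) ≤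
      Filter.liminf (fun n : ℕ => (n : ℝ) ^ ζ * ((1/2) * ∫ l, (q n l) ^ 2 ∂ρ))
        Filter.atTop := by
  obtain ⟨w, hwdef⟩ : ∃ w : ℕ → ℝ, ∀ k, w k = x k ^ ζ - x (k+1) ^ ζ := ⟨_, fun _ => rfl⟩
  have hwpos : ∀ k, 0 < w k := fun k => by
    rw [hwdef]; exact sub_pos.2 (Real.rpow_lt_rpow (hx0 _).le (hx (Nat.lt_succ_self k)) hζ)
  have hw : ∀ k, 0 ≤ w k := fun k => (hwpos k).le
  have hws : Summable w := by
    have hy : Antitone (fun k => x k ^ ζ) := fun a b h =>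
      Real.rpow_le_rpow (hx0 b).le (hx.antitone h) hζ.le
    have hl : Tendsto (fun k => x k ^ ζ) atTop (nhds 0) := by
      have := hlim.rpow_const (p := ζ) (Or.inr hζ.le)
      rwa [Real.zero_rpow hζ.ne'] at this
    refine (sd_tele _ hy hl).summable.congr fun k => (hwdef k).symm
  simp only [← hwdef] at hc hρ
  have hx100 : ∀ k, x k ≤ 1/100 := fun k => (hx.antitone (Nat.zero_le k)).trans hx1
  have hx1' : ∀ k, x k ≤ 1 := fun k => (hx100 k).trans (by norm_num)
  have hwx : Summable (fun k => w k * x k) :=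
    Summable.of_nonneg_of_le (fun k => mul_nonneg (hw k) (hx0 k).le)
      (fun k => mul_le_of_le_one_right (hw k) (hx1' k)) hws
  have hcpos : 0 < c := by
    rw [hc]
    exact hwx.tsum_pos (fun k => mul_nonneg (hw k) (hx0 k).le) 0 (mul_pos (hwpos 0) (hx0 0))
  have hI := sd_integral x w c ρ hw hws (fun k => (hx0 k).le) hx1' hcpos.le hρ
  have hqc : ∀ n, Continuous (q n) := by
    intro n
    induction n with
    | zero =>
      have : q 0 = fun _ => 1 := funext hq0
      rw [this]; exact continuous_const
    | succ n ih =>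
      have : q (n+1) = fun l => (1 - A n * l) * q n l := funext (hqrec n)
      rw [this]; fun_prop
  have hae : ∀ᵐ l ∂ρ, 0 ≤ l ∧ l ≤ 1 := by
    have hms : MeasurableSet {l : ℝ | 0 ≤ l ∧ l ≤ 1} := measurableSet_Icc
    rw [hρ, ae_add_measure_iff]
    constructor
    · rw [Measure.ae_sum_iff' hms]
      intro k
      apply Measure.ae_smul_measure
      rw [ae_dirac_iff hms]
      exact ⟨(hx0 k).le, hx1' k⟩
    · apply Measure.ae_smul_measure
      rw [ae_dirac_iff hms]
      norm_num
  -- moments at time zero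
  have hmom : ∀ j : ℕ, Summable (fun k => w k * x k ^ j) ∧
      ∫ l, l ^ j * (q 0 l) ^ 2 ∂ρ = ∑' k, w k * x k ^ j + c := by
    intro j
    have := hI (fun l => l ^ j) (by fun_prop)
    refine ⟨this.2.1, ?_⟩
    simp only [hq0, one_pow, mul_one]
    rw [this.2.2]; simp
  have hm1 : ∫ l, l ^ 1 * (q 0 l) ^ 2 ∂ρ = 2 * c := by
    rw [(hmom 1).2]; simp only [pow_one]; rw [← hc]; ring
  have hm2 : ∫ l, l ^ 2 * (q 0 l) ^ 2 ∂ρ ≤ 1.01 * c := by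
    rw [(hmom 2).2]
    have : ∑' k, w k * x k ^ 2 ≤ ∑' k, (1/100) * (w k * x k) := by
      refine (hmom 2).1.tsum_le_tsum (fun k => ?_) (hwx.mul_left _)
      have := mul_nonneg (hw k) (hx0 k).le
      nlinarith [hx100 k]
    rw [tsum_mul_left, ← hc] at this
    linarith
  have hm2' : 0 ≤ ∫ l, l ^ 2 * (q 0 l) ^ 2 ∂ρ := integral_nonneg fun l => by positivity
  have hm3 : c ≤ ∫ l, l ^ 3 * (q 0 l) ^ 2 ∂ρ := by
    rw [(hmom 3).2]
    have : 0 ≤ ∑' k, w k * x k ^ 3 := tsum_nonneg fun k => mul_nonneg (hw k) (pow_nonneg (hx0 k).le _)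
    linarith
  have hdyn := sd_dyn ρ (fun f hf => (hI f hf).1) hae q A hqc hA hqrec (by rw [hm1]; positivity)
    (by rw [hm1]; nlinarith)
  -- bounds on q
  have hqb : ∀ (n k : ℕ), Real.exp (-(5 * n * x k)) ≤ q n (x k) ∧ q n (x k) ≤ Real.exp (-(n * x k)) := by
    intro n k
    induction n with
    | zero => simp [hq0]
    | succ n ih =>
      obtain ⟨a1, a2, -⟩ := hdyn n
      have p0 := hx0 k
      have p1 := hx100 k
      obtain ⟨u, hu⟩ : ∃ u, u = A n * x k := ⟨_, rfl⟩
      have u1 : x k ≤ u := by rw [hu]; nlinarith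
      have u2 : u ≤ 5/2 * x k := by rw [hu]; nlinarith
      have f1 : 1 - u ≤ Real.exp (-(x k)) := by linarith [Real.add_one_le_exp (-(x k))]
      have f2 : Real.exp (-(5 * x k)) ≤ 1 - u := by
        have : Real.exp (-(5 * x k)) ≤ 1 / (1 + 5 * x k) := by
          rw [Real.exp_neg, ← one_div]
          apply one_div_le_one_div_of_le (by positivity)
          linarith [Real.add_one_le_exp (5 * x k)]
        refine this.trans ?_
        rw [div_le_iff₀ (by positivity)]
        nlinarith
      have q0 : 0 ≤ q n (x k) := (Real.exp_pos _).le.trans ih.1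
      have u0 : 0 ≤ 1 - u := (Real.exp_pos _).le.trans f2
      rw [hqrec, ← hu]
      constructor
      · have : Real.exp (-(5 * ((n+1:ℕ):ℝ) * x k)) = Real.exp (-(5 * x k)) * Real.exp (-(5 * n * x k)) := by
          rw [← Real.exp_add]; push_cast; ring_nf
        rw [this]
        exact mul_le_mul f2 ih.1 (Real.exp_pos _).le u0
      · have : Real.exp (-(((n+1:ℕ):ℝ) * x k)) = Real.exp (-(x k)) * Real.exp (-(n * x k)) := by
          rw [← Real.exp_add]; push_cast; ring_nf
        rw [this]
        exact mul_le_mul f1 ih.2 q0 (Real.exp_pos _).le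
  have hes : ∀ b : ℝ, Summable (fun k => w k * Real.exp (-(b * x k))) := fun b =>
    (hI (fun l => Real.exp (-(b * l))) (by fun_prop)).2.1
  have hlow : ∀ n : ℕ, ∑' k, w k * Real.exp (-(10 * n * x k)) ≤ ∫ l, (q n l) ^ 2 ∂ρ := by
    intro n
    have h := hI (fun l => (q n l)^2) ((hqc n).pow 2)
    rw [h.2.2]
    have h1 : ∑' k, w k * Real.exp (-(10 * n * x k)) ≤ ∑' k, w k * (q n (x k))^2 := by
      refine (hes _).tsum_le_tsum (fun k => ?_) h.2.1
      refine mul_le_mul_of_nonneg_left ?_ (hw k)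
      have : Real.exp (-(10 * n * x k)) = Real.exp (-(5 * n * x k)) ^ 2 := by
        rw [← Real.exp_nat_mul]; push_cast; ring_nf
      rw [this]
      exact pow_le_pow_left₀ (Real.exp_pos _).le (hqb n k).1 2
    have : 0 ≤ c * (q n 1)^2 := by positivity
    linarith
  have hup : ∀ n : ℕ, ∫ l, (q n l) ^ 2 ∂ρ ≤ 3 * ∑' k, w k * Real.exp (-(2 * n * x k)) := by
    intro n
    have h := hI (fun l => (q n l)^2) ((hqc n).pow 2)
    have hL := hI (fun l => l ^ 1 * (q n l)^2) (by have := hqc n; fun_prop)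
    have hL2 := hI (fun l => l ^ 2 * (q n l)^2) (by have := hqc n; fun_prop)
    rw [h.2.2]
    have h1 : ∑' k, w k * (q n (x k))^2 ≤ ∑' k, w k * Real.exp (-(2 * n * x k)) := by
      refine h.2.1.tsum_le_tsum (fun k => ?_) (hes _)
      refine mul_le_mul_of_nonneg_left ?_ (hw k)
      have : Real.exp (-(2 * n * x k)) = Real.exp (-(n * x k)) ^ 2 := by
        rw [← Real.exp_nat_mul]; push_cast; ring_nf
      rw [this]
      exact pow_le_pow_left₀ ((Real.exp_pos _).le.trans (hqb n k).1) (hqb n k).2 2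
    have h2 : ∑' k, w k * (x k ^ 1 * (q n (x k))^2) ≤ ∑' k, w k * (q n (x k))^2 := by
      refine hL.2.1.tsum_le_tsum (fun k => ?_) h.2.1
      refine mul_le_mul_of_nonneg_left ?_ (hw k)
      rw [pow_one]
      exact mul_le_of_le_one_left (sq_nonneg _) (hx1' k)
    have h3 : 0 ≤ ∑' k, w k * (x k ^ 2 * (q n (x k))^2) := tsum_nonneg fun k => mul_nonneg (hw k) (by positivity)
    have h4 := (hdyn n).2.2
    rw [hL.2.2, hL2.2.2] at h4
    simp only [one_pow, one_mul] at h4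
    have h5 : 0 ≤ ∑' k, w k * Real.exp (-(2 * n * x k)) :=
      tsum_nonneg fun k => mul_nonneg (hw k) (Real.exp_pos _).le
    linarith
  have hG : 0 < Real.Gamma (ζ+1) := Real.Gamma_pos_of_pos (by linarith)
  apply le_liminf_of_le
  · apply IsBoundedUnder.isCoboundedUnder_ge
    refine ⟨3/2 * Real.Gamma (ζ+1) / 2 ^ ζ, ?_⟩
    rw [eventually_map]
    filter_upwards [eventually_gt_atTop 0] with n hn
    have hn' : (0:ℝ) < n := Nat.cast_pos.2 hn
    have h1 := sd_upper ζ (2*n) hζ (by positivity) x hx hx0 hlim (by simpa only [hwdef] using hes (2*n))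
    simp only [← hwdef] at h1
    have h2 := hup n
    have hnz : 0 < (n:ℝ)^ζ := by positivity
    calc (n : ℝ) ^ ζ * ((1/2) * ∫ l, (q n l) ^ 2 ∂ρ) 
        ≤ (n : ℝ) ^ ζ * ((1/2) * (3 * (Real.Gamma (ζ+1) / (2*n)^ζ))) := by
          gcongr; linarith
      _ = _ := by
        rw [Real.mul_rpow (by norm_num) hn'.le]
        field_simp
  · obtain ⟨N, hN⟩ := eventually_atTop.1 hx2
    have hxN : StrictAnti (fun k => x (k + N)) := fun a b h => hx (by omega)
    have hlimN : Tendsto (fun k => x (k + N)) atTop (nhds 0) := (tendsto_add_atTop_iff_nat N).2 hlim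
    have hbd : ∀ n : ℕ, 0 < n → 
        Real.Gamma (ζ+1) / 2 * ((1/20:ℝ)^ζ - Real.exp (-(10 * n * x N)) * (1/10:ℝ)^ζ) ≤ 
        (n : ℝ) ^ ζ * ((1/2) * ∫ l, (q n l) ^ 2 ∂ρ) := by
      intro n hn
      have hn' : (0:ℝ) < n := Nat.cast_pos.2 hn
      have hs := (summable_nat_add_iff N).2 (hes (10*n))
      have h1 := sd_lower ζ (10*n) hζ (by positivity) (fun k => x (k+N)) hxN (fun k => hx0 _) hlimN
        (fun k => by
          have := hN (k+N) (by omega)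
          rwa [show k + N + 1 = k + 1 + N by omega] at this)
        (hs.congr fun k => by simp only [hwdef, show k + N + 1 = k + 1 + N by omega])
      have h2 : ∑' k, (x (k+N) ^ ζ - x (k+1+N) ^ ζ) * Real.exp (-(10 * n * x (k+N))) ≤
          ∑' k, w k * Real.exp (-(10 * n * x k)) := by
        rw [← (hes (10*n)).sum_add_tsum_nat_add N]
        have : 0 ≤ ∑ i ∈ Finset.range N, w i * Real.exp (-(10 * n * x i)) :=
          Finset.sum_nonneg fun i _ => mul_nonneg (hw i) (Real.exp_pos _).le
        have e : ∀ k, (x (k+N) ^ ζ - x (k+1+N) ^ ζ) = w (k+N) := fun k => by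
          simp only [hwdef, show k + N + 1 = k + 1 + N by omega]
        simp only [e]
        linarith
      have h3 := h1.trans (h2.trans (hlow n))
      simp only [zero_add] at h3
      have hnz : 0 < (n:ℝ)^ζ := by positivity
      refine le_trans (le_of_eq ?_) (mul_le_mul_of_nonneg_left 
        (mul_le_mul_of_nonneg_left h3 (by norm_num : (0:ℝ) ≤ 1/2)) hnz.le)
      rw [show (2 * (10 * (n:ℝ))) = 20 * n by ring, Real.mul_rpow (by norm_num) hn'.le,
        Real.mul_rpow (by norm_num) hn'.le, Real.div_rpow (by norm_num) (by norm_num),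
        Real.div_rpow (by norm_num) (by norm_num), Real.one_rpow]
      field_simp
    have hT : Tendsto (fun n : ℕ => Real.Gamma (ζ+1) / 2 * ((1/20:ℝ)^ζ - Real.exp (-(10 * n * x N)) * (1/10:ℝ)^ζ))
        atTop (nhds (Real.Gamma (ζ+1) / 2 * ((1/20:ℝ)^ζ - 0 * (1/10:ℝ)^ζ))) := by
      refine Tendsto.const_mul _ (Tendsto.sub tendsto_const_nhds (Tendsto.mul_const _ ?_))
      apply Real.tendsto_exp_neg_atTop_nhds_zero.comp
      have : (fun n : ℕ => 10 * (n:ℝ) * x N) = fun n : ℕ => (n:ℝ) * (10 * x N) := by ext n; ring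
      rw [this]
      exact tendsto_natCast_atTop_atTop.atTop_mul_const (by have := hx0 N; positivity)
    have hlt : (10:ℝ) ^ (-(2 * ζ)) * Real.Gamma (ζ + 1) / (2 * (2 * Real.log 2) ^ ζ) <
        Real.Gamma (ζ+1) / 2 * ((1/20:ℝ)^ζ - 0 * (1/10:ℝ)^ζ) := by
      have hl2 : 0.69 < Real.log 2 := by linarith [Real.log_two_gt_d9]
      have e1 : (10:ℝ) ^ (-(2 * ζ)) = (1/100:ℝ)^ζ := by
        rw [show -(2*ζ) = (-2:ℝ) * ζ by ring, Real.rpow_mul (by norm_num)]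
        congr 1
        rw [show (-2:ℝ) = ((-2:ℤ):ℝ) by norm_num, Real.rpow_intCast]; norm_num
      have e2 : (10:ℝ) ^ (-(2 * ζ)) * Real.Gamma (ζ + 1) / (2 * (2 * Real.log 2) ^ ζ) =
          Real.Gamma (ζ+1) / 2 * ((1/100) / (2 * Real.log 2)) ^ ζ := by
        rw [e1, Real.div_rpow (x := (1/100:ℝ)) (y := 2 * Real.log 2) (by norm_num) (by positivity)]
        field_simp
      rw [e2, zero_mul, sub_zero]
      refine mul_lt_mul_of_pos_left (Real.rpow_lt_rpow (by positivity) ?_ hζ) (by positivity)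
      rw [div_lt_iff₀ (by positivity)]
      linarith
    filter_upwards [hT.eventually (lt_mem_nhds hlt), eventually_gt_atTop 0] with n h1 h2
    exact h1.le.trans (hbd n h2)


/-- A lower bound for Steepest Descent: the explicit discrete measure
`ρ = Σ_{k>k₀} (k^{-ζν} − (k+1)^{-ζν}) δ_{k^{-ν}} + c δ_1` (with `k₀ = ⌈10^{2/ν}⌉` and
`c` the total `λ`-mass of the first part) satisfies the power-law spectral condition
`ρ((0,λ]) ≤ λ^ζ`, and the SD losses obey
`liminf_{n→∞} n^ζ L_n ≥ 10^{-2ζ} Γ(ζ+1)/(2(2 ln 2)^ζ)`.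
(The summation index `k` below represents `k₀ + 1 + k`.) -/
theorem steepest_descent_lower_bound
    (ζ ν : ℝ) (hζ : 0 < ζ) (hν : 0 < ν)
    (k₀ : ℕ) (hk₀ : k₀ = ⌈(10:ℝ) ^ (2 / ν)⌉₊)
    (c : ℝ)
    (hc : c = ∑' k : ℕ,
      (((k : ℝ) + k₀ + 1) ^ (-(ζ * ν)) - ((k : ℝ) + k₀ + 2) ^ (-(ζ * ν))) *
        ((k : ℝ) + k₀ + 1) ^ (-ν))
    (ρ : Measure ℝ)
    (hρ : ρ = Measure.sum (fun k : ℕ =>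
        ENNReal.ofReal
            (((k : ℝ) + k₀ + 1) ^ (-(ζ * ν)) - ((k : ℝ) + k₀ + 2) ^ (-(ζ * ν))) •
          Measure.dirac (((k : ℝ) + k₀ + 1) ^ (-ν)))
      + ENNReal.ofReal c • Measure.dirac (1:ℝ))
    (q : ℕ → ℝ → ℝ) (A : ℕ → ℝ)
    (hq0 : ∀ l, q 0 l = 1)
    (hA : ∀ n, A n = (∫ l, l * (q n l) ^ 2 ∂ρ) / ∫ l, l ^ 2 * (q n l) ^ 2 ∂ρ)
    (hqrec : ∀ n l, q (n + 1) l = (1 - A n * l) * q n l) :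
    (∀ l ∈ Set.Icc (0:ℝ) 1, (ρ (Set.Ioc 0 l)).toReal ≤ l ^ ζ) ∧
    (10:ℝ) ^ (-(2 * ζ)) * Real.Gamma (ζ + 1) / (2 * (2 * Real.log 2) ^ ζ) ≤
      Filter.liminf (fun n : ℕ => (n : ℝ) ^ ζ * ((1/2) * ∫ l, (q n l) ^ 2 ∂ρ))
        Filter.atTop := by
  obtain ⟨x, hx⟩ : ∃ x : ℕ → ℝ, ∀ k : ℕ, x k = ((k:ℝ) + k₀ + 1) ^ (-ν) := ⟨_, fun _ => rfl⟩
  obtain ⟨h1, h2, h3, h4, h5, h6, h7⟩ := sd_seq ζ ν hζ hν k₀ (by rw [hk₀]; exact Nat.le_ceil _) x hx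
  have h6' : ∀ k : ℕ, ((k : ℝ) + k₀ + 2) ^ (-(ζ * ν)) = x (k+1) ^ ζ := by
    intro k
    rw [h6]; push_cast
    congr 1; ring
  simp only [h6', ← h6, ← hx] at hc hρ
  have hc0 : 0 ≤ c := by
    rw [hc]
    exact tsum_nonneg fun k => mul_nonneg (sub_nonneg.2
      (Real.rpow_le_rpow (h2 _).le (h1.antitone (Nat.le_succ k)) hζ.le)) (h2 k).le
  exact ⟨sd_measure ζ hζ x c ρ h1 h2 h3 h4 hc0 (by rw [hc]; exact h7) hρ,
    sd_main ζ hζ x c ρ h1 h2 h3 h4 h5 hc hρ q A hq0 hA hqrec⟩
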